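/- Let A be a complex (or real) Banach algebra, a ∈ A with ‖a‖ ≤ 1, and a_n = (1/n) Σ_{k=1}^{n} a^k. If the sequence (a_n) converges to r ∈ A in the weak topology σ(A, A*), then a·r = r·a = r and r is idempotent: r·r = r. -/

import Mathlib

/-!
The averages satisfy `a * a_n - a_n = (1/n) (a^(n+1) - a)`, which tends to `0` in norm because
the powers of `a` lie in the unit ball. Left and right multiplication by a fixed element are
weakly continuous, so passing to the weak limit gives `a * r = r`, and `r * a = r` since `a`
commutes with every `a_n`. Then `a^k * r = r` for all `k ≥ 1`, hence `a_n * r = r` for `n ≥ 1`,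
and the weak limit of this identity is `r * r = r`. Hahn–Banach turns equality under all
functionals into equality in the algebra.
-/

/-- `npow1 a k = a^(k+1)`, powers in a possibly non-unital ring. -/
noncomputable def npow1 {B : Type*} [NonUnitalRing B] (a : B) : ℕ → B
  | 0 => a
  | n + 1 => a * npow1 a n

/-- The Cesàro averages `a_n = (1/n) Σ_{k=1}^{n} a^k`. -/
noncomputable def cesaro {B : Type*} [NonUnitalNormedRing B] [NormedSpace ℝ B]
    (a : B) (n : ℕ) : B :=
  (n : ℝ)⁻¹ • ∑ k ∈ Finset.range n, npow1 a k

theorem npow1_mul_self {B : Type*} [NonUnitalRing B] (a : B) (k : ℕ) :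
    npow1 a k * a = a * npow1 a k := by
  induction k with
  | zero => rfl
  | succ k ih => simp only [npow1, mul_assoc, ih]

theorem npow1_mul_of_fixed {B : Type*} [NonUnitalRing B] {a r : B} (h : a * r = r) (k : ℕ) :
    npow1 a k * r = r := by
  induction k with
  | zero => exact h
  | succ k ih => simp only [npow1, mul_assoc, ih, h]

theorem norm_npow1_le_one {B : Type*} [NonUnitalNormedRing B] {a : B} (ha : ‖a‖ ≤ 1) (k : ℕ) :
    ‖npow1 a k‖ ≤ 1 := by
  induction k with
  | zero => exact ha
  | succ k ih => exact (norm_mul_le _ _).trans (mul_le_one₀ ha (norm_nonneg _) ih)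

section

variable {B : Type*} [NonUnitalNormedRing B] [NormedSpace ℝ B]

theorem cesaro_mul_self [IsScalarTower ℝ B B] [SMulCommClass ℝ B B] (a : B) (n : ℕ) :
    cesaro a n * a = a * cesaro a n := by
  simp only [cesaro, smul_mul_assoc, mul_smul_comm, Finset.sum_mul, Finset.mul_sum,
    npow1_mul_self]

theorem mul_cesaro_sub [SMulCommClass ℝ B B] (a : B) (n : ℕ) :
    a * cesaro a n - cesaro a n = (n : ℝ)⁻¹ • (npow1 a n - a) := by
  simp only [cesaro, mul_smul_comm, Finset.mul_sum, ← smul_sub, ← Finset.sum_sub_distrib]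
  congr 1
  exact Finset.sum_range_sub (npow1 a) n

theorem cesaro_mul_of_fixed [IsScalarTower ℝ B B] {a r : B} (h : a * r = r) {n : ℕ} (hn : n ≠ 0) :
    cesaro a n * r = r := by
  have hn' : (n : ℝ) ≠ 0 := Nat.cast_ne_zero.mpr hn
  simp only [cesaro, smul_mul_assoc, Finset.sum_mul, npow1_mul_of_fixed h, Finset.sum_const,
    Finset.card_range]
  rw [← Nat.cast_smul_eq_nsmul ℝ, inv_smul_smul₀ hn']

theorem tendsto_mul_cesaro_sub [SMulCommClass ℝ B B] {a : B} (ha : ‖a‖ ≤ 1) :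
    Filter.Tendsto (fun n => a * cesaro a n - cesaro a n) Filter.atTop (nhds 0) := by
  simp only [mul_cesaro_sub]
  refine squeeze_zero_norm (a := fun n : ℕ => (n : ℝ)⁻¹ * 2) (fun n => ?_) ?_
  · rw [norm_smul, norm_inv, Real.norm_natCast]
    gcongr
    linarith [norm_sub_le (npow1 a n) a, norm_npow1_le_one ha n]
  · simpa using (tendsto_inv_atTop_nhds_zero_nat (𝕜 := ℝ)).mul_const 2

end

/-- If the Cesàro averages `a_n` converge to `r` in the weak topology `σ(B, B*)`, then
`a·r = r·a = r` and `r` is idempotent. -/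
theorem weak_limit_cesaro_idempotent {B : Type*} [NonUnitalNormedRing B] [NormedSpace ℝ B]
    [IsScalarTower ℝ B B] [SMulCommClass ℝ B B] [CompleteSpace B]
    (a : B) (ha : ‖a‖ ≤ 1) (r : B)
    (hr : Filter.Tendsto (fun n : ℕ => toWeakSpace ℝ B (cesaro a n)) Filter.atTop
      (nhds (toWeakSpace ℝ B r))) :
    a * r = r ∧ r * a = r ∧ r * r = r := by
  have hf (f : StrongDual ℝ B) :
      Filter.Tendsto (fun n => f (cesaro a n)) Filter.atTop (nhds (f r)) :=
    ((WeakBilin.eval_continuous (topDualPairing ℝ B).flip f).tendsto _).comp hr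
  have hleft (b : B) (f : StrongDual ℝ B) :
      Filter.Tendsto (fun n => f (b * cesaro a n)) Filter.atTop (nhds (f (b * r))) :=
    hf (f.comp (ContinuousLinearMap.mul ℝ B b))
  have hright (b : B) (f : StrongDual ℝ B) :
      Filter.Tendsto (fun n => f (cesaro a n * b)) Filter.atTop (nhds (f (r * b))) :=
    hf (f.comp ((ContinuousLinearMap.mul ℝ B).flip b))
  have har : a * r = r := by
    refine (SeparatingDual.eq_iff_forall_dual_eq (R := ℝ)).mpr fun f => ?_
    have h0 := (f.continuous.tendsto 0).comp (tendsto_mul_cesaro_sub ha)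
    have h1 := (hleft a f).sub (hf f)
    simp only [Function.comp_def, map_sub, map_zero] at h0
    exact sub_eq_zero.mp (tendsto_nhds_unique h1 h0)
  have hra : r * a = a * r := by
    refine (SeparatingDual.eq_iff_forall_dual_eq (R := ℝ)).mpr fun f => ?_
    have h := hright a f
    simp only [cesaro_mul_self] at h
    exact tendsto_nhds_unique h (hleft a f)
  refine ⟨har, hra.trans har, ?_⟩
  refine (SeparatingDual.eq_iff_forall_dual_eq (R := ℝ)).mpr fun f => ?_
  refine tendsto_nhds_unique (hright r f) (tendsto_const_nhds.congr' ?_)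
  filter_upwards [Filter.eventually_ne_atTop 0] with n hn
  rw [cesaro_mul_of_fixed har hn]
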